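/- arXiv:math/9910155 — 10 statements merged into one kernel-verified Lean document; each statement's English description precedes it below -/
import Mathlib

section
/- Let S be a numerical semigroup with genus g and conductor c. For every integer m with m ≥ c one has ν(m) = m + 1 − 2g + D(m), where D(m) denotes the number of pairs (x,y) of gaps of S with x + y = m. -/
/-!
Among the `m + 1` pairs `(a, b)` with `a + b = m`, let `A` be those with `a` a gap and `B` those
with `b` a gap. Every gap is smaller than the conductor, hence at most `m`, so each gap occurs
exactly once as a first coordinate and once as a second coordinate: `#A = #B = g`.
The pairs in `S × S` are the complement of `A ∪ B`, and the pairs of gaps are `A ∩ B`, so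
inclusion–exclusion gives `ν(m) = m + 1 - (2g - D(m))`.
-/

/-- A numerical semigroup: a subset of ℕ containing 0, closed under addition,
with finite complement in ℕ. -/
def IsNumericalSemigroup (S : Set ℕ) : Prop :=
  0 ∈ S ∧ (∀ a b, a ∈ S → b ∈ S → a + b ∈ S) ∧ Sᶜ.Finite

/-- The genus of a numerical semigroup: the number of gaps. -/
noncomputable def genus (S : Set ℕ) : ℕ := Sᶜ.ncard

/-- The conductorNS: the least `c` such that every `n ≥ c` belongs to `S`. -/
noncomputable def conductorNS (S : Set ℕ) : ℕ := sInf {c | ∀ n, c ≤ n → n ∈ S}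

/-- `nu S r` is the number of pairs `(a,b) ∈ S × S` with `a + b = r`. -/
noncomputable def nu (S : Set ℕ) (r : ℕ) : ℕ :=
  {p : ℕ × ℕ | p.1 ∈ S ∧ p.2 ∈ S ∧ p.1 + p.2 = r}.ncard

/-- The Feng–Rao distance: `δ_FR(m) = min {ν(r) : r ∈ S, r ≥ m}`. -/
noncomputable def deltaFR (S : Set ℕ) (m : ℕ) : ℕ :=
  sInf (nu S '' {r | r ∈ S ∧ m ≤ r})

/-- Membership of an integer in a subset of ℕ (negative integers never belong). -/
def memZ (S : Set ℕ) (r : ℤ) : Prop := 0 ≤ r ∧ r.toNat ∈ S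

/-- `S` is symmetric: for every integer `r`, `r ∈ S ↔ c - 1 - r ∉ S`. -/
def IsSymmetricNS (S : Set ℕ) : Prop :=
  ∀ r : ℤ, memZ S r ↔ ¬ memZ S ((conductorNS S : ℤ) - 1 - r)

/-- `δ(q)`: the least integer `d ≥ 1` such that `q - d ∉ S`
(negative integers are not in `S`). -/
noncomputable def deltaGap (S : Set ℕ) (q : ℕ) : ℕ :=
  sInf {d | 1 ≤ d ∧ ¬ memZ S ((q : ℤ) - (d : ℤ))}

/-- The `i`-th Apéry element of `S` relative to `e`:
the least element of `S` congruent to `i` modulo `e`. -/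
noncomputable def apery (S : Set ℕ) (e i : ℕ) : ℕ :=
  sInf {m | m ∈ S ∧ m % e = i % e}

/-- The Apéry relations `α_{i,j}` defined by `a_i + a_j = a_{(i+j) % e} + α_{i,j} * e`. -/
noncomputable def aperyRel (S : Set ℕ) (e i j : ℕ) : ℕ :=
  (apery S e i + apery S e j - apery S e ((i + j) % e)) / e

/-- The "minimum formula" holds at `m`:
`δ_FR(m) = min {r ∈ S : r ≥ m + 1 - 2g}`. -/
def MinFormula (S : Set ℕ) (m : ℕ) : Prop :=
  deltaFR S m = sInf {r | r ∈ S ∧ (m : ℤ) + 1 - 2 * (genus S : ℤ) ≤ (r : ℤ)}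

/-- The infimum defining the conductor is attained: since `S` has finitely many gaps, the set of
admissible bounds is nonempty. -/
theorem mem_of_conductorNS_le {S : Set ℕ} (hS : IsNumericalSemigroup S) {n : ℕ}
    (hn : conductorNS S ≤ n) : n ∈ S := by
  have hne : {c | ∀ n, c ≤ n → n ∈ S}.Nonempty := by
    obtain ⟨b, hb⟩ := hS.2.2.bddAbove
    refine ⟨b + 1, fun k hk => ?_⟩
    by_contra hkS
    have : k ≤ b := hb hkS
    omega
  exact Nat.sInf_mem hne n hn

open Classical in
/-- For `m` at least the conductor, every gap is the first coordinate of exactly one pair with sum `m`. -/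
theorem card_filter_fst_notMem {S : Set ℕ} (hS : IsNumericalSemigroup S) {m : ℕ}
    (hm : conductorNS S ≤ m) :
    ((Finset.HasAntidiagonal.antidiagonal m).filter (fun p => p.1 ∉ S)).card = genus S := by
  rw [genus, ← Set.ncard_coe_finset]
  refine Set.ncard_congr (fun p _ => p.1) ?_ ?_ ?_
  · intro p hp
    simp only [Finset.coe_filter, Set.mem_ofPred_eq] at hp
    exact hp.2
  · rintro ⟨a, b⟩ ⟨a', b'⟩ hp hq h
    simp only [Finset.coe_filter, Set.mem_ofPred_eq, Finset.HasAntidiagonal.mem_antidiagonal] at hp hq h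
    ext <;> simp <;> omega
  · intro a ha
    have hlt : a < m := by
      by_contra h
      exact ha (mem_of_conductorNS_le hS (by omega))
    refine ⟨(a, m - a), ?_, rfl⟩
    simp only [Finset.coe_filter, Set.mem_ofPred_eq, Finset.HasAntidiagonal.mem_antidiagonal]
    exact ⟨by omega, ha⟩

open Classical in
theorem card_filter_snd_notMem {S : Set ℕ} (hS : IsNumericalSemigroup S) {m : ℕ}
    (hm : conductorNS S ≤ m) :
    ((Finset.HasAntidiagonal.antidiagonal m).filter (fun p => p.2 ∉ S)).card = genus S := by
  rw [← card_filter_fst_notMem hS hm]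
  refine Finset.card_bij' (fun p _ => p.swap) (fun p _ => p.swap) ?_ ?_ ?_ ?_ <;>
    simp +contextual [add_comm]

/-- for every `m ≥ c`, `ν(m) = m + 1 - 2g + D(m)`, where `D(m)` is the
number of pairs of gaps of `S` summing to `m`. -/
theorem stmt_1 (S : Set ℕ) (hS : IsNumericalSemigroup S) (m : ℕ)
    (hm : conductorNS S ≤ m) :
    (nu S m : ℤ) = (m : ℤ) + 1 - 2 * (genus S : ℤ) +
      ({p : ℕ × ℕ | p.1 ∉ S ∧ p.2 ∉ S ∧ p.1 + p.2 = m}.ncard : ℤ) := by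
  classical
  have hnu : nu S m =
      ((Finset.HasAntidiagonal.antidiagonal m).filter (fun p => ¬ (p.1 ∉ S ∨ p.2 ∉ S))).card := by
    rw [nu, ← Set.ncard_coe_finset]
    congr 1
    ext p
    simp only [Finset.coe_filter, Set.mem_ofPred_eq, Finset.HasAntidiagonal.mem_antidiagonal]
    tauto
  have hD : {p : ℕ × ℕ | p.1 ∉ S ∧ p.2 ∉ S ∧ p.1 + p.2 = m}.ncard =
      ((Finset.HasAntidiagonal.antidiagonal m).filter (fun p => p.1 ∉ S ∧ p.2 ∉ S)).card := by
    rw [← Set.ncard_coe_finset]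
    congr 1
    ext p
    simp only [Finset.coe_filter, Set.mem_ofPred_eq, Finset.HasAntidiagonal.mem_antidiagonal]
    tauto
  have hcompl := Finset.card_filter_add_card_filter_not (s := Finset.HasAntidiagonal.antidiagonal m)
    (fun p => p.1 ∉ S ∨ p.2 ∉ S)
  have hie := Finset.card_union_add_card_inter
    ((Finset.HasAntidiagonal.antidiagonal m).filter (fun p => p.1 ∉ S))
    ((Finset.HasAntidiagonal.antidiagonal m).filter (fun p => p.2 ∉ S))
  rw [← Finset.filter_or, ← Finset.filter_and, card_filter_fst_notMem hS hm,
    card_filter_snd_notMem hS hm] at hie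
  rw [Finset.Nat.card_antidiagonal] at hcompl
  rw [hnu, hD]
  omega
end

section
/- Let S be a numerical semigroup with genus g. For every m ∈ S with m ≥ 4g − 1 one has ν(m) = m + 1 − 2g. -/
/-- A gap is smaller than twice the genus. -/
theorem gap_lt_two_mul_genus (S : Set ℕ) (hS : IsNumericalSemigroup S) {x : ℕ} (hx : x ∉ S) :
    x + 1 ≤ 2 * genus S := by
  obtain ⟨-, hadd, hfin⟩ := hS
  have hg : genus S = hfin.toFinset.card := Set.ncard_eq_toFinset_card _ hfin
  have hcover : Finset.range (x + 1) ⊆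
      hfin.toFinset ∪ hfin.toFinset.image (fun a => x - a) := by
    intro a ha
    have hax : a ≤ x := by simpa [Nat.lt_succ_iff] using ha
    simp only [Finset.mem_union, Finset.mem_image, Set.Finite.mem_toFinset, Set.mem_compl_iff]
    by_cases h : a ∈ S
    · refine Or.inr ⟨x - a, fun h2 => hx ?_, by omega⟩
      have := hadd _ _ h h2
      rwa [Nat.add_sub_cancel' hax] at this
    · exact Or.inl h
  have h1 := Finset.card_le_card hcover
  have h2 := Finset.card_union_le hfin.toFinset (hfin.toFinset.image (fun a => x - a))
  have h3 := Finset.card_image_le (s := hfin.toFinset) (f := fun a => x - a)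
  rw [Finset.card_range] at h1
  omega

/-- for every `m ∈ S` with `m ≥ 4g - 1`, `ν(m) = m + 1 - 2g`. -/
theorem stmt_2 (S : Set ℕ) (hS : IsNumericalSemigroup S) (m : ℕ) (hm : m ∈ S)
    (h4g : 4 * (genus S : ℤ) - 1 ≤ (m : ℤ)) :
    (nu S m : ℤ) = (m : ℤ) + 1 - 2 * (genus S : ℤ) := by
  have hgap : ∀ x, x ∉ S → x + 1 ≤ 2 * genus S := fun x hx => gap_lt_two_mul_genus S hS hx
  obtain ⟨-, -, hfin⟩ := hS
  have hg : genus S = hfin.toFinset.card := Set.ncard_eq_toFinset_card _ hfin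
  have hle : ∀ x, x ∉ S → x ≤ m := fun x hx => by have := hgap x hx; omega
  set G := hfin.toFinset with hG
  have memG : ∀ x, x ∈ G ↔ x ∉ S := by simp [hG]
  set R := G.image (fun a => m - a) with hR
  have memR : ∀ x, x ≤ m → (x ∈ R ↔ m - x ∉ S) := by
    intro x hx
    simp only [hR, Finset.mem_image, memG]
    constructor
    · rintro ⟨a, ha, rfl⟩
      rwa [Nat.sub_sub_self (hle a ha)]
    · intro h
      exact ⟨m - x, h, by omega⟩
  have hRcard : R.card = G.card := by
    apply Finset.card_image_of_injOn
    intro a ha b hb hab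
    have h1 := hle a ((memG a).1 ha)
    have h2 := hle b ((memG b).1 hb)
    simp only at hab
    omega
  have hdisj : Disjoint G R := by
    rw [Finset.disjoint_left]
    intro a ha har
    have ha' := (memG a).1 ha
    have h1 := hgap a ha'
    have h2 := hgap _ ((memR a (hle a ha')).1 har)
    omega
  have hsub : G ∪ R ⊆ Finset.range (m + 1) := by
    intro a ha
    rw [Finset.mem_range]
    rcases Finset.mem_union.1 ha with h | h
    · have := hle a ((memG a).1 h)
      omega
    · obtain ⟨b, -, rfl⟩ := Finset.mem_image.1 h
      omega
  have hset : {p : ℕ × ℕ | p.1 ∈ S ∧ p.2 ∈ S ∧ p.1 + p.2 = m} =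
      (((Finset.range (m + 1) \ (G ∪ R)).image fun a => (a, m - a) : Finset (ℕ × ℕ)) :
        Set (ℕ × ℕ)) := by
    ext ⟨a, b⟩
    simp only [Set.mem_ofPred_eq, Finset.coe_image, Set.mem_image, Finset.mem_coe,
      Finset.mem_sdiff, Finset.mem_range, Finset.mem_union, not_or, Prod.mk.injEq]
    constructor
    · rintro ⟨ha, hb, rfl⟩
      refine ⟨a, ⟨by omega, by simpa [memG] using ha, ?_⟩, rfl, by omega⟩
      rw [memR a (by omega)]
      simpa using hb
    · rintro ⟨a, ⟨h1, h2, h3⟩, rfl, rfl⟩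
      rw [memG, not_not] at h2
      rw [memR a (by omega), not_not] at h3
      exact ⟨h2, h3, by omega⟩
  have hnu : nu S m = m + 1 - (G.card + G.card) := by
    rw [nu, hset, Set.ncard_coe_finset,
      Finset.card_image_of_injective _ (fun a b h => (Prod.mk.inj h).1),
      Finset.card_sdiff_of_subset hsub, Finset.card_union_of_disjoint hdisj, hRcard,
      Finset.card_range]
  have hcard := Finset.card_le_card hsub
  rw [Finset.card_union_of_disjoint hdisj, hRcard, Finset.card_range] at hcard
  omega
end

section
/- Let S be a numerical semigroup with genus g. For every m ∈ S one has δ_FR(m) ≥ m + 1 − 2g, and if moreover m ≥ 4g − 1 then δ_FR(m) = m + 1 − 2g. -/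
open Classical in
lemma nu_eq_card (S : Set ℕ) (r : ℕ) :
    nu S r = ((Finset.range (r + 1)).filter (fun a => a ∈ S ∧ r - a ∈ S)).card := by
  have h : {p : ℕ × ℕ | p.1 ∈ S ∧ p.2 ∈ S ∧ p.1 + p.2 = r} =
      (fun a => (a, r - a)) ''
        ((Finset.range (r + 1)).filter (fun a => a ∈ S ∧ r - a ∈ S) : Set ℕ) := by
    ext ⟨a, b⟩
    simp only [Set.mem_ofPred_eq, Set.mem_image, Finset.coe_filter, Finset.mem_range,
      Prod.mk.injEq]
    constructor
    · rintro ⟨ha, hb, hr⟩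
      have hb' : r - a = b := by omega
      exact ⟨a, ⟨by omega, ha, hb' ▸ hb⟩, rfl, hb'⟩
    · rintro ⟨c, ⟨hc, ha, hb⟩, rfl, rfl⟩
      exact ⟨ha, hb, by omega⟩
  rw [nu, h, Set.ncard_image_of_injective _ (fun a b hab => (Prod.mk.inj hab).1),
    Set.ncard_coe_finset]

open Classical in
/-- The reflection `a ↦ r - a` matches the pairs whose second coordinate is a gap with those
whose first coordinate is a gap. -/
lemma card_reflect (S : Set ℕ) (r : ℕ) :
    ((Finset.range (r + 1)).filter (fun a => r - a ∉ S)).card =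
      ((Finset.range (r + 1)).filter (fun a => a ∉ S)).card := by
  refine Finset.card_nbij' (fun a => r - a) (fun a => r - a) ?_ ?_ ?_ ?_
  · intro a ha
    simp only [Finset.coe_filter, Finset.mem_range, Set.mem_ofPred_eq] at ha ⊢
    exact ⟨by omega, ha.2⟩
  · intro a ha
    simp only [Finset.coe_filter, Finset.mem_range, Set.mem_ofPred_eq] at ha ⊢
    have h : r - (r - a) = a := by omega
    exact ⟨by omega, by rw [h]; exact ha.2⟩
  all_goals
    intro a ha
    simp only [Finset.coe_filter, Finset.mem_range, Set.mem_ofPred_eq] at ha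
    change r - (r - a) = a
    omega

open Classical in
lemma card_gaps_le (S : Set ℕ) (hS : Sᶜ.Finite) (r : ℕ) :
    ((Finset.range (r + 1)).filter (fun a => a ∉ S)).card ≤ genus S := by
  rw [genus, ← Set.ncard_coe_finset]
  refine Set.ncard_le_ncard ?_ hS
  intro a ha
  simp only [Finset.coe_filter, Set.mem_ofPred_eq] at ha
  exact ha.2

open Classical in
/-- A pair fails to be counted by `ν(r)` exactly when one of its coordinates is a gap. -/
lemma nu_add_card (S : Set ℕ) (r : ℕ) :
    nu S r + ((Finset.range (r + 1)).filter (fun a => a ∉ S) ∪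
      (Finset.range (r + 1)).filter (fun a => r - a ∉ S)).card = r + 1 := by
  have h := Finset.card_filter_add_card_filter_not (s := Finset.range (r + 1))
    (fun a => a ∈ S ∧ r - a ∈ S)
  rw [Finset.card_range] at h
  rw [nu_eq_card, ← Finset.filter_or]
  simpa only [not_and_or] using h

lemma le_nu (S : Set ℕ) (hS : Sᶜ.Finite) (r : ℕ) : r + 1 ≤ nu S r + 2 * genus S := by
  classical
  have h1 := nu_add_card S r
  have h2 := card_gaps_le S hS r
  have h3 := card_reflect S r
  have h4 := Finset.card_union_le ((Finset.range (r + 1)).filter (fun a => a ∉ S))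
    ((Finset.range (r + 1)).filter (fun a => r - a ∉ S))
  omega

lemma gap_lt (S : Set ℕ) (hS : IsNumericalSemigroup S) (x : ℕ) (hx : x ∉ S) :
    x + 1 ≤ 2 * genus S := by
  have h0 : nu S x = 0 := by
    have h : {p : ℕ × ℕ | p.1 ∈ S ∧ p.2 ∈ S ∧ p.1 + p.2 = x} = ∅ := by
      ext ⟨a, b⟩
      simp only [Set.mem_ofPred_eq, Set.mem_empty_iff_false, iff_false]
      rintro ⟨ha, hb, rfl⟩
      exact hx (hS.2.1 a b ha hb)
    rw [nu, h, Set.ncard_empty]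
  have := le_nu S hS.2.2 x
  omega

lemma nu_eq (S : Set ℕ) (hS : IsNumericalSemigroup S) (r : ℕ) (hr : 4 * genus S ≤ r + 1) :
    nu S r + 2 * genus S = r + 1 := by
  classical
  have h1 := nu_add_card S r
  have h3 := card_reflect S r
  have h2 : ((Finset.range (r + 1)).filter (fun a => a ∉ S)).card = genus S := by
    rw [genus, ← Set.ncard_coe_finset]
    congr 1
    ext a
    simp only [Finset.coe_filter, Finset.mem_range, Set.mem_ofPred_eq, Set.mem_compl_iff]
    refine ⟨fun h => h.2, fun h => ⟨?_, h⟩⟩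
    have := gap_lt S hS a h
    omega
  have h4 : Disjoint ((Finset.range (r + 1)).filter (fun a => a ∉ S))
      ((Finset.range (r + 1)).filter (fun a => r - a ∉ S)) := by
    rw [Finset.disjoint_left]
    intro a ha hb
    simp only [Finset.mem_filter, Finset.mem_range] at ha hb
    have := gap_lt S hS a ha.2
    have := gap_lt S hS _ hb.2
    omega
  rw [Finset.card_union_of_disjoint h4] at h1
  omega

/-- for every `m ∈ S`, `δ_FR(m) ≥ m + 1 - 2g`, with equality if
moreover `m ≥ 4g - 1`. -/
theorem stmt_3 (S : Set ℕ) (hS : IsNumericalSemigroup S) :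
    (∀ m ∈ S, (m : ℤ) + 1 - 2 * (genus S : ℤ) ≤ (deltaFR S m : ℤ)) ∧
      ∀ m ∈ S, 4 * (genus S : ℤ) - 1 ≤ (m : ℤ) →
        (deltaFR S m : ℤ) = (m : ℤ) + 1 - 2 * (genus S : ℤ) := by
  have lower : ∀ m ∈ S, (m : ℤ) + 1 - 2 * (genus S : ℤ) ≤ (deltaFR S m : ℤ) := by
    intro m hm
    -- The set of values is nonempty, so the infimum is one of the values `ν(r)` with `r ≥ m`.
    have hne : (nu S '' {r | r ∈ S ∧ m ≤ r}).Nonempty := ⟨_, m, ⟨hm, le_rfl⟩, rfl⟩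
    obtain ⟨r, ⟨-, hmr⟩, hr⟩ := Nat.sInf_mem hne
    have h := le_nu S hS.2.2 r
    rw [deltaFR, ← hr]
    omega
  refine ⟨lower, fun m hm h4 => le_antisymm ?_ (lower m hm)⟩
  have hle : deltaFR S m ≤ nu S m := Nat.sInf_le ⟨m, ⟨hm, le_rfl⟩, rfl⟩
  have h := nu_eq S hS m (by omega)
  omega
end

section
/- Let S be a numerical semigroup with genus g and let m ∈ S. Let m′ be the least element of S with m′ ≥ m and ν(m′) = m′ + 1 − 2g (such an element exists). Then δ_FR(m) = min{ν(r) : r ∈ S, m ≤ r ≤ m′}. -/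
lemma le_nu_add_two_mul_genus {S : Set ℕ} (hfin : Sᶜ.Finite) (r : ℕ) :
    r + 1 ≤ nu S r + 2 * genus S := by
  classical
  have hg : genus S = hfin.toFinset.card := Set.ncard_eq_toFinset_card _ hfin
  have hsub : Finset.range (r + 1) ⊆
      (Finset.range (r + 1)).filter (fun a => a ∈ S ∧ r - a ∈ S) ∪
        (hfin.toFinset ∪ hfin.toFinset.image (fun x => r - x)) := by
    intro a ha
    have ha' := Finset.mem_range.1 ha
    by_cases h1 : a ∈ S
    · by_cases h2 : r - a ∈ S
      · exact Finset.mem_union_left _ (Finset.mem_filter.2 ⟨ha, h1, h2⟩)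
      · refine Finset.mem_union_right _ (Finset.mem_union_right _ ?_)
        exact Finset.mem_image.2 ⟨r - a, by simpa using h2, by omega⟩
    · exact Finset.mem_union_right _ (Finset.mem_union_left _ (by simpa using h1))
  have h1 := Finset.card_le_card hsub
  have h2 := Finset.card_union_le
    ((Finset.range (r + 1)).filter (fun a => a ∈ S ∧ r - a ∈ S))
    (hfin.toFinset ∪ hfin.toFinset.image (fun x => r - x))
  have h3 := Finset.card_union_le hfin.toFinset (hfin.toFinset.image (fun x => r - x))
  have h4 : (hfin.toFinset.image (fun x => r - x)).card ≤ _ := Finset.card_image_le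
  rw [Finset.card_range, ← nu_eq_card] at *
  omega

/-- If every gap is less than `r / 2`, the decompositions of `r` whose first component is a gap
and those whose second component is a gap form disjoint families of `genus S` elements each. -/
lemma nu_add_two_mul_genus_of_large {S : Set ℕ} (hfin : Sᶜ.Finite) {r : ℕ}
    (hr : ∀ x, x ∉ S → 2 * x < r) : nu S r + 2 * genus S = r + 1 := by
  classical
  have hg : genus S = hfin.toFinset.card := Set.ncard_eq_toFinset_card _ hfin
  have heq : (Finset.range (r + 1)).filter (fun a => ¬ (a ∈ S ∧ r - a ∈ S)) =
      hfin.toFinset ∪ hfin.toFinset.image (fun x => r - x) := by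
    ext a
    simp only [Finset.mem_filter, Finset.mem_range, Finset.mem_union, Finset.mem_image,
      Set.Finite.mem_toFinset, Set.mem_compl_iff]
    constructor
    · rintro ⟨ha, h⟩
      by_cases h1 : a ∈ S
      · exact Or.inr ⟨r - a, fun h2 => h ⟨h1, h2⟩, by omega⟩
      · exact Or.inl h1
    · rintro (h | ⟨x, hx, rfl⟩)
      · have := hr a h
        exact ⟨by omega, fun h' => h h'.1⟩
      · have := hr x hx
        refine ⟨by omega, fun h' => hx ?_⟩
        have h2 := h'.2
        rwa [show r - (r - x) = x by omega] at h2
  have hdisj : Disjoint hfin.toFinset (hfin.toFinset.image (fun x => r - x)) := by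
    rw [Finset.disjoint_left]
    intro a ha hb
    obtain ⟨x, hx, hxa⟩ := Finset.mem_image.1 hb
    have h1 := hr a (by simpa using ha)
    have h2 := hr x (by simpa using hx)
    omega
  have himg : (hfin.toFinset.image (fun x => r - x)).card = hfin.toFinset.card := by
    refine Finset.card_image_of_injOn ?_
    intro a ha b hb hab
    have h1 := hr a (by simpa using ha)
    have h2 := hr b (by simpa using hb)
    simp only at hab
    omega
  have hsum := Finset.card_filter_add_card_filter_not (s := Finset.range (r + 1))
    (fun a => a ∈ S ∧ r - a ∈ S)
  rw [heq, Finset.card_union_of_disjoint hdisj, himg, Finset.card_range, ← nu_eq_card] at hsum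
  omega

/-- let `m'` be the least element of `S` with `m' ≥ m` and
`ν(m') = m' + 1 - 2g` (such an element exists). Then
`δ_FR(m) = min {ν(r) : r ∈ S, m ≤ r ≤ m'}`. -/
theorem stmt_4 (S : Set ℕ) (hS : IsNumericalSemigroup S) (m : ℕ) (hm : m ∈ S)
    (m' : ℕ)
    (hm' : m' = sInf {r | r ∈ S ∧ m ≤ r ∧ (nu S r : ℤ) = (r : ℤ) + 1 - 2 * (genus S : ℤ)}) :
    (m' ∈ S ∧ m ≤ m' ∧ (nu S m' : ℤ) = (m' : ℤ) + 1 - 2 * (genus S : ℤ)) ∧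
      deltaFR S m = sInf (nu S '' {r | r ∈ S ∧ m ≤ r ∧ r ≤ m'}) := by
  obtain ⟨-, -, hfin⟩ := hS
  have hne : {r | r ∈ S ∧ m ≤ r ∧
      (nu S r : ℤ) = (r : ℤ) + 1 - 2 * (genus S : ℤ)}.Nonempty := by
    obtain ⟨B, hB⟩ := hfin.bddAbove
    have hB' : ∀ x, x ∉ S → x ≤ B := fun x hx => hB hx
    refine ⟨m + 2 * B + 1, ?_, by omega, ?_⟩
    · by_contra h
      have := hB' _ h
      omega
    · have := nu_add_two_mul_genus_of_large hfin (r := m + 2 * B + 1)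
        (fun x hx => by have := hB' x hx; omega)
      omega
  have hmem := Nat.sInf_mem hne
  rw [← hm'] at hmem
  obtain ⟨h1, h2, h3⟩ := hmem
  refine ⟨⟨h1, h2, h3⟩, ?_⟩
  unfold deltaFR
  apply le_antisymm
  · refine le_csInf ⟨_, m', ⟨h1, h2, le_rfl⟩, rfl⟩ ?_
    rintro _ ⟨r, ⟨hr, hmr, -⟩, rfl⟩
    exact Nat.sInf_le ⟨r, ⟨hr, hmr⟩, rfl⟩
  · refine le_csInf ⟨_, m', ⟨h1, h2⟩, rfl⟩ ?_
    rintro _ ⟨r, ⟨hr, hmr⟩, rfl⟩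
    rcases le_or_gt r m' with h | h
    · exact Nat.sInf_le ⟨r, ⟨hr, hmr, h⟩, rfl⟩
    · have hle : sInf (nu S '' {r | r ∈ S ∧ m ≤ r ∧ r ≤ m'}) ≤ nu S m' :=
        Nat.sInf_le ⟨m', ⟨h1, h2, le_rfl⟩, rfl⟩
      have := le_nu_add_two_mul_genus hfin r
      omega
end

section
/- Let S be a numerical semigroup with genus g and conductor c, and let m ∈ S with m ≥ c be such that no two gaps of S sum to m (that is, D(m) = 0, where D(m) denotes the number of pairs (x,y) of gaps of S with x + y = m). Then δ_FR(m) = ν(m) = m + 1 − 2g. -/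
theorem le_of_conductorNS_le {S : Set ℕ} (hS : IsNumericalSemigroup S) {r x : ℕ}
    (hr : conductorNS S ≤ r) (hx : x ∉ S) : x ≤ r := by
  have hne : {c | ∀ n, c ≤ n → n ∈ S}.Nonempty := by
    obtain ⟨b, hb⟩ := hS.2.2.bddAbove
    refine ⟨b + 1, fun n hn => ?_⟩
    by_contra h
    have := hb h
    omega
  have hmem : conductorNS S ∈ {c | ∀ n, c ≤ n → n ∈ S} := Nat.sInf_mem hne
  by_contra h
  exact hx (hmem x (by omega))

/-- For `r ≥ c`, the integers `0, …, r` split into the first coordinates of the pairs counted by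
`ν(r)` and the elements of `G ∪ (r - G)`, where `G` is the set of gaps. -/
theorem nu_add_card_union {S : Set ℕ} (hS : IsNumericalSemigroup S) {r : ℕ}
    (hr : conductorNS S ≤ r) :
    nu S r + (hS.2.2.toFinset ∪ hS.2.2.toFinset.image (r - ·)).card = r + 1 := by
  set G := hS.2.2.toFinset with hG
  have hmem : ∀ x, x ∈ G ↔ x ∉ S := fun x => by simp [hG]
  have hle : ∀ x ∈ G, x ≤ r := fun x hx => le_of_conductorNS_le hS hr ((hmem x).1 hx)
  have hsub : G ∪ G.image (r - ·) ⊆ Finset.range (r + 1) := by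
    intro x hx
    rw [Finset.mem_range]
    rcases Finset.mem_union.1 hx with h | h
    · have := hle x h
      omega
    · obtain ⟨y, -, rfl⟩ := Finset.mem_image.1 h
      omega
  have hset : {p : ℕ × ℕ | p.1 ∈ S ∧ p.2 ∈ S ∧ p.1 + p.2 = r} =
      (fun a => (a, r - a)) '' ↑(Finset.range (r + 1) \ (G ∪ G.image (r - ·))) := by
    ext ⟨a, b⟩
    simp only [Set.mem_ofPred_eq, Set.mem_image, Finset.mem_coe, Finset.mem_sdiff,
      Finset.mem_range, Finset.mem_union, Finset.mem_image, Prod.mk.injEq, not_or, not_exists,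
      not_and]
    constructor
    · rintro ⟨ha, hb, hab⟩
      refine ⟨a, ⟨by omega, fun h => (hmem a).1 h ha, fun y hy hya => ?_⟩, rfl, by omega⟩
      have := hle y hy
      have hyb : y = b := by omega
      exact (hmem y).1 hy (hyb ▸ hb)
    · rintro ⟨a', ⟨har, hag, himg⟩, rfl, rfl⟩
      refine ⟨?_, ?_, by omega⟩
      · by_contra h
        exact hag ((hmem _).2 h)
      · by_contra h
        exact himg _ ((hmem _).2 h) (by omega)
  have hnu : nu S r = (Finset.range (r + 1) \ (G ∪ G.image (r - ·))).card := by
    rw [nu, hset, Set.ncard_image_of_injective _ (fun a b h => (Prod.mk.inj h).1),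
      Set.ncard_coe_finset]
  rw [hnu, Finset.card_sdiff_add_card_eq_card hsub, Finset.card_range]

theorem le_nu_add_two_genus {S : Set ℕ} (hS : IsNumericalSemigroup S) {r : ℕ}
    (hr : conductorNS S ≤ r) : r + 1 ≤ nu S r + 2 * genus S := by
  have h := nu_add_card_union hS hr
  have hu := Finset.card_union_le hS.2.2.toFinset (hS.2.2.toFinset.image (r - ·))
  have hi : (hS.2.2.toFinset.image (r - ·)).card ≤ _ := Finset.card_image_le
  have hg : genus S = hS.2.2.toFinset.card := Set.ncard_eq_toFinset_card _ hS.2.2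
  omega

theorem nu_add_two_genus {S : Set ℕ} (hS : IsNumericalSemigroup S) {r : ℕ}
    (hr : conductorNS S ≤ r) (hD : ∀ x y : ℕ, x ∉ S → y ∉ S → x + y ≠ r) :
    nu S r + 2 * genus S = r + 1 := by
  have h := nu_add_card_union hS hr
  have hg : genus S = hS.2.2.toFinset.card := Set.ncard_eq_toFinset_card _ hS.2.2
  have hle : ∀ x ∈ hS.2.2.toFinset, x ∉ S ∧ x ≤ r := fun x hx => by
    have hx' : x ∉ S := by simpa using hx
    exact ⟨hx', le_of_conductorNS_le hS hr hx'⟩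
  have hdisj : Disjoint hS.2.2.toFinset (hS.2.2.toFinset.image (r - ·)) := by
    rw [Finset.disjoint_left]
    intro x hx hx'
    obtain ⟨y, hy, hyx⟩ := Finset.mem_image.1 hx'
    have := (hle y hy).2
    exact hD x y (hle x hx).1 (hle y hy).1 (by omega)
  -- truncated subtraction from `r` is injective on the gaps because they are at most `r`
  have hi : (hS.2.2.toFinset.image (r - ·)).card = hS.2.2.toFinset.card := by
    refine Finset.card_image_of_injOn fun x hx y hy hxy => ?_
    have h1 := (hle x hx).2
    have h2 := (hle y hy).2
    have h3 : r - x = r - y := hxy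
    omega
  rw [Finset.card_union_of_disjoint hdisj, hi] at h
  omega

/-- if `m ∈ S`, `m ≥ c` and no two gaps of `S` sum to `m`, then
`δ_FR(m) = ν(m) = m + 1 - 2g`. -/
theorem stmt_5 (S : Set ℕ) (hS : IsNumericalSemigroup S) (m : ℕ) (hm : m ∈ S)
    (hc : conductorNS S ≤ m)
    (hD : ∀ x y : ℕ, x ∉ S → y ∉ S → x + y ≠ m) :
    deltaFR S m = nu S m ∧ (nu S m : ℤ) = (m : ℤ) + 1 - 2 * (genus S : ℤ) := by
  have heq := nu_add_two_genus hS hc hD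
  refine ⟨le_antisymm (Nat.sInf_le ⟨m, ⟨hm, le_rfl⟩, rfl⟩) ?_, by omega⟩
  refine le_csInf ⟨_, m, ⟨hm, le_rfl⟩, rfl⟩ ?_
  rintro _ ⟨r, ⟨-, hr⟩, rfl⟩
  have := le_nu_add_two_genus hS (hc.trans hr)
  omega
end

section
/- Let S be a numerical semigroup, let e ∈ S∖{0}, and let m ∈ S have Apéry coordinates m = a_i + l·e relative to e. Then ν(m) = B_i^{(0)} + B_i^{(1)} + … + B_i^{(l)}, where for h ≥ 0 one sets B_i^{(h)} = #{k ∈ ℤ/e : α_{k,(i−k) mod e} ≤ h}. -/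
/-- Every residue class modulo `e` meets `S` because `Sᶜ` is finite, so the infimum defining
the Apéry element is attained. -/
lemma apery_spec {S : Set ℕ} (hS : IsNumericalSemigroup S) {e : ℕ} (he0 : e ≠ 0) (k : ℕ) :
    apery S e k ∈ S ∧ apery S e k % e = k % e := by
  obtain ⟨N, hN⟩ := hS.2.2.bddAbove
  refine Nat.sInf_mem (s := {m | m ∈ S ∧ m % e = k % e}) ⟨k + (N + 1) * e, ?_, by simp⟩
  by_contra h
  have h1 := hN h
  have h2 : (N + 1) * 1 ≤ (N + 1) * e := Nat.mul_le_mul_left _ (Nat.pos_of_ne_zero he0)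
  omega

/-- Existence of the quotient part of the Apéry coordinates of `x ∈ S`. -/
lemma exists_apery_add {S : Set ℕ} {e x k : ℕ} (hx : x ∈ S) (hk : x % e = k % e) :
    ∃ u, x = apery S e k + u * e := by
  have hmem : apery S e k ∈ {m | m ∈ S ∧ m % e = k % e} := Nat.sInf_mem ⟨x, hx, hk⟩
  have hle : apery S e k ≤ x := Nat.sInf_le ⟨hx, hk⟩
  obtain ⟨u, hu⟩ := (Nat.modEq_iff_dvd' hle).1 (hmem.2.trans hk.symm)
  exact ⟨u, by rw [mul_comm] at hu; omega⟩

lemma apery_add_mul_mem {S : Set ℕ} (hS : IsNumericalSemigroup S) {e : ℕ} (he : e ∈ S)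
    (he0 : e ≠ 0) (k u : ℕ) : apery S e k + u * e ∈ S := by
  induction u with
  | zero => simpa using (apery_spec hS he0 k).1
  | succ u ih =>
    rw [add_mul, one_mul, ← add_assoc]
    exact hS.2.1 _ _ ih he

/-- The defining identity of the Apéry relations; in particular neither the subtraction nor the
division in `aperyRel` loses anything. -/
lemma apery_add_apery {S : Set ℕ} (hS : IsNumericalSemigroup S) {e : ℕ} (he0 : e ≠ 0)
    (k j : ℕ) :
    apery S e k + apery S e j = apery S e ((k + j) % e) + aperyRel S e k j * e := by
  have hk := apery_spec hS he0 k
  have hj := apery_spec hS he0 j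
  obtain ⟨u, hu⟩ := exists_apery_add (e := e) (k := (k + j) % e) (hS.2.1 _ _ hk.1 hj.1)
    (by rw [Nat.mod_mod, Nat.add_mod, hk.2, hj.2, ← Nat.add_mod])
  have : aperyRel S e k j = u := by
    unfold aperyRel
    rw [hu, Nat.add_sub_cancel_left, Nat.mul_div_cancel _ (Nat.pos_of_ne_zero he0)]
  rw [this, hu]

/-- if `m ∈ S` has Apéry coordinates `m = a_i + l·e` relative to `e`,
then `ν(m) = B_i^(0) + B_i^(1) + … + B_i^(l)`, where
`B_i^(h) = #{k ∈ ℤ/e : α_{k,(i−k) mod e} ≤ h}`. -/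
theorem stmt_6 (S : Set ℕ) (hS : IsNumericalSemigroup S)
    (e : ℕ) (he : e ∈ S) (he0 : e ≠ 0)
    (m : ℕ) (hm : m ∈ S) (i l : ℕ) (hi : i = m % e)
    (hl : m = apery S e i + l * e) :
    nu S m = ∑ t ∈ Finset.range (l + 1),
      ((Finset.range e).filter (fun k => aperyRel S e k ((i + e - k) % e) ≤ t)).card := by
  classical
  have hepos := Nat.pos_of_ne_zero he0
  have hie : i < e := hi ▸ Nat.mod_lt _ hepos
  have hkj : ∀ k < e, (k + (i + e - k) % e) % e = i := by
    intro k hk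
    rw [Nat.add_mod_mod, show k + (i + e - k) = i + e by omega, Nat.add_mod_right,
      Nat.mod_eq_of_lt hie]
  have hrel : ∀ k < e, apery S e k + apery S e ((i + e - k) % e)
      = apery S e i + aperyRel S e k ((i + e - k) % e) * e := by
    intro k hk
    rw [apery_add_apery hS he0, hkj k hk]
  let P : Finset (Σ _ : ℕ, ℕ) := (Finset.range (l + 1)).sigma fun t =>
    (Finset.range e).filter (fun k => aperyRel S e k ((i + e - k) % e) ≤ t)
  let f : (Σ _ : ℕ, ℕ) → ℕ × ℕ := fun p =>
    (apery S e p.2 + (p.1 - aperyRel S e p.2 ((i + e - p.2) % e)) * e,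
      apery S e ((i + e - p.2) % e) + (l - p.1) * e)
  have hP : ∀ t k, (⟨t, k⟩ : Σ _ : ℕ, ℕ) ∈ P ↔
      t ≤ l ∧ k < e ∧ aperyRel S e k ((i + e - k) % e) ≤ t := by
    intro t k
    simp [P]
  have himg : {p : ℕ × ℕ | p.1 ∈ S ∧ p.2 ∈ S ∧ p.1 + p.2 = m} = ↑(P.image f) := by
    ext ⟨a, b⟩
    simp only [Set.mem_ofPred_eq, Finset.coe_image, Set.mem_image, Finset.mem_coe]
    constructor
    · rintro ⟨ha, hb, hab⟩
      have hk : a % e < e := Nat.mod_lt _ hepos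
      -- the residue of `b` is forced to be `(i - k) mod e` by cancelling `k = a mod e`
      have hbj : b % e = (i + e - a % e) % e := by
        have h : a % e + b ≡ a % e + (i + e - a % e) % e [MOD e] := by
          unfold Nat.ModEq
          rw [hkj _ hk, Nat.mod_add_mod, hab, hi]
        have h' := Nat.ModEq.add_left_cancel' _ h
        unfold Nat.ModEq at h'
        rwa [Nat.mod_mod] at h'
      obtain ⟨u, hu⟩ := exists_apery_add (e := e) (k := a % e) ha (by simp)
      obtain ⟨v, hv⟩ := exists_apery_add (e := e) (k := (i + e - a % e) % e) hb (by simpa using hbj)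
      have hr := hrel _ hk
      have hsum : aperyRel S e (a % e) ((i + e - a % e) % e) + u + v = l := by
        apply Nat.eq_of_mul_eq_mul_right hepos
        rw [add_mul, add_mul]
        omega
      refine ⟨⟨l - v, a % e⟩, (hP _ _).2 ⟨by omega, hk, by omega⟩, ?_⟩
      simp only [f, Prod.mk.injEq]
      rw [show l - v - aperyRel S e (a % e) ((i + e - a % e) % e) = u by omega,
        show l - (l - v) = v by omega]
      exact ⟨hu.symm, hv.symm⟩
    · rintro ⟨⟨t, k⟩, hp, hf⟩
      obtain ⟨htl, hk, hat⟩ := (hP _ _).1 hp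
      simp only [f, Prod.mk.injEq] at hf
      obtain ⟨rfl, rfl⟩ := hf
      refine ⟨apery_add_mul_mem hS he he0 _ _, apery_add_mul_mem hS he he0 _ _, ?_⟩
      have hr := hrel k hk
      have hsum : l = aperyRel S e k ((i + e - k) % e)
          + (t - aperyRel S e k ((i + e - k) % e)) + (l - t) := by omega
      have hsum' := congrArg (· * e) hsum
      simp only [add_mul] at hsum'
      omega
  have hinj : Set.InjOn f P := by
    rintro ⟨t, k⟩ hp ⟨t', k'⟩ hp' hff
    obtain ⟨htl, hk, hat⟩ := (hP _ _).1 hp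
    obtain ⟨htl', hk', hat'⟩ := (hP _ _).1 hp'
    simp only [f, Prod.mk.injEq] at hff
    obtain ⟨h1, h2⟩ := hff
    -- `k` is recovered as the residue of the first component
    have hkk : k = k' := by
      have h := congrArg (· % e) h1
      simpa [(apery_spec hS he0 _).2, Nat.mod_eq_of_lt hk, Nat.mod_eq_of_lt hk'] using h
    subst hkk
    have h3 := Nat.eq_of_mul_eq_mul_right hepos (Nat.add_left_cancel h2)
    obtain rfl : t = t' := by omega
    rfl
  unfold nu
  rw [himg, Set.ncard_coe_finset, Finset.card_image_of_injOn hinj, Finset.card_sigma]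
end

section
/- Let S be a numerical semigroup, let e ∈ S∖{0}, and let m ∈ S have Apéry coordinates m = a_i + l·e relative to e. For each residue j mod e, let t_j be the least natural number with t_j ≥ max{(a_i − a_j)/e + l, 0}, and set m_j = a_j + t_j·e; equivalently, m_j is the least element of S congruent to j modulo e satisfying m_j ≥ m. Then δ_FR(m) = min{ν(m_j) : j ∈ ℤ/e}. -/
theorem nu_set_finite (S : Set ℕ) (r : ℕ) :
    {p : ℕ × ℕ | p.1 ∈ S ∧ p.2 ∈ S ∧ p.1 + p.2 = r}.Finite := by
  refine (Finset.HasAntidiagonal.antidiagonal r).finite_toSet.subset ?_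
  rintro p ⟨-, -, h⟩
  simpa using h

theorem nu_le_nu_add {S : Set ℕ} (hadd : ∀ a b, a ∈ S → b ∈ S → a + b ∈ S)
    {s : ℕ} (hs : s ∈ S) (r : ℕ) : nu S r ≤ nu S (r + s) := by
  refine Set.ncard_le_ncard_of_injOn (fun p : ℕ × ℕ => (p.1 + s, p.2)) ?_ ?_
    (nu_set_finite S (r + s))
  · rintro ⟨a, b⟩ ⟨ha, hb, h⟩
    refine ⟨hadd a s ha hs, hb, ?_⟩
    dsimp only at h ⊢
    omega
  · rintro ⟨a, b⟩ - ⟨c, d⟩ - h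
    simp only [Prod.mk.injEq] at h ⊢
    omega

theorem mul_mem_of_add_mem {S : Set ℕ} (h0 : 0 ∈ S)
    (hadd : ∀ a b, a ∈ S → b ∈ S → a + b ∈ S) {e : ℕ} (he : e ∈ S) (k : ℕ) : e * k ∈ S := by
  induction k with
  | zero => simpa using h0
  | succ k ih => rw [Nat.mul_succ]; exact hadd _ _ ih he

theorem exists_mem_mod_eq {S : Set ℕ} (hfin : Sᶜ.Finite) {e j : ℕ} (hj : j < e) (m : ℕ) :
    {r | r ∈ S ∧ r % e = j ∧ m ≤ r}.Nonempty := by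
  obtain ⟨B, hB⟩ := hfin.bddAbove
  have hle : m + B + 1 ≤ e * (m + B + 1) := Nat.le_mul_of_pos_left _ (by omega)
  refine ⟨j + e * (m + B + 1), ?_, ?_, by omega⟩
  · by_contra h
    have := hB h
    omega
  · rw [Nat.add_mul_mod_self_left, Nat.mod_eq_of_lt hj]

/-- with `m ∈ S` and, for each residue `j` mod `e`, `m_j` the least
element of `S` congruent to `j` modulo `e` with `m_j ≥ m`, one has
`δ_FR(m) = min {ν(m_j) : j ∈ ℤ/e}`. -/
theorem stmt_7 (S : Set ℕ) (hS : IsNumericalSemigroup S)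
    (e : ℕ) (he : e ∈ S) (he0 : e ≠ 0)
    (m : ℕ) (hm : m ∈ S) :
    deltaFR S m =
      sInf ((fun j => nu S (sInf {r | r ∈ S ∧ r % e = j ∧ m ≤ r})) '' Set.Iio e) := by
  obtain ⟨h0, hadd, hfin⟩ := hS
  apply le_antisymm
  · refine le_csInf (Set.Nonempty.image _ ⟨0, Nat.pos_of_ne_zero he0⟩) ?_
    rintro _ ⟨j, hj, rfl⟩
    obtain ⟨hmem, -, hle⟩ := Nat.sInf_mem (exists_mem_mod_eq hfin hj m)
    exact Nat.sInf_le ⟨_, ⟨hmem, hle⟩, rfl⟩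
  · refine le_csInf (Set.Nonempty.image _ ⟨m, hm, le_rfl⟩) ?_
    rintro _ ⟨r, ⟨hr, hmr⟩, rfl⟩
    have hj : r % e < e := Nat.mod_lt _ (Nat.pos_of_ne_zero he0)
    refine le_trans (Nat.sInf_le (Set.mem_image_of_mem _ hj)) ?_
    have hle : sInf {x | x ∈ S ∧ x % e = r % e ∧ m ≤ x} ≤ r := Nat.sInf_le ⟨hr, rfl, hmr⟩
    obtain ⟨-, hmod, -⟩ := Nat.sInf_mem (exists_mem_mod_eq hfin hj m)
    -- `r` and `m_j` are congruent modulo `e`, so `r = m_j + e * k` with `e * k ∈ S`.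
    obtain ⟨k, hk⟩ := (Nat.modEq_iff_dvd' hle).mp hmod
    have := nu_le_nu_add hadd (mul_mem_of_add_mem h0 hadd he k)
      (sInf {x | x ∈ S ∧ x % e = r % e ∧ m ≤ x})
    rwa [← hk, Nat.add_sub_cancel' hle] at this
end

section
/- Let S be a symmetric numerical semigroup with conductor c, let m ∈ S with c ≤ m ≤ 2c − 2, and set n = m − c + 1 and q = c − 1 − n = 2c − 2 − m. Then ν(m) = n + ν(q) (note that ν(q) = 0 when q ∉ S, which happens exactly when n ∈ S). -/
lemma memZ_natCast (S : Set ℕ) (a : ℕ) : memZ S (a : ℤ) ↔ a ∈ S := by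
  simp [memZ]

lemma IsSymmetricNS.mem_of_le {S : Set ℕ} (hsym : IsSymmetricNS S) {a : ℕ}
    (h : conductorNS S ≤ a) : a ∈ S := by
  rw [← memZ_natCast, hsym]
  rintro ⟨h0, -⟩
  omega

lemma IsSymmetricNS.mem_iff {S : Set ℕ} (hsym : IsSymmetricNS S) {a b : ℕ}
    (h : a + b + 1 = conductorNS S) : a ∈ S ↔ b ∉ S := by
  rw [← memZ_natCast, hsym, ← memZ_natCast S b]
  have : (conductorNS S : ℤ) - 1 - a = b := by omega
  rw [this]

open Classical in
/-- Reflecting `[0, c - 1]` swaps gaps and elements of `S`; no gap lies in `[c, m]`. -/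
lemma two_mul_card_gaps {S : Set ℕ} (hsym : IsSymmetricNS S) {m : ℕ} (hc : conductorNS S ≤ m) :
    2 * ((Finset.range (m + 1)).filter (fun a => a ∉ S)).card = conductorNS S := by
  have h1 : (Finset.range (m + 1)).filter (fun a => a ∉ S) =
      (Finset.range (conductorNS S)).filter (fun a => a ∉ S) := by
    ext a
    simp only [Finset.mem_filter, Finset.mem_range]
    constructor
    · rintro ⟨_, h⟩
      exact ⟨by by_contra hh; exact h (hsym.mem_of_le (by omega)), h⟩
    · rintro ⟨h, h'⟩
      exact ⟨by omega, h'⟩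
  have h2 : ((Finset.range (conductorNS S)).filter (fun a => a ∉ S)).card =
      ((Finset.range (conductorNS S)).filter (fun a => a ∈ S)).card := by
    refine Finset.card_nbij' (fun a => conductorNS S - 1 - a) (fun a => conductorNS S - 1 - a)
      ?_ ?_ ?_ ?_
    · intro a ha
      simp only [Finset.coe_filter, Finset.mem_range, Set.mem_ofPred_eq] at ha ⊢
      exact ⟨by omega, (hsym.mem_iff (b := a) (by omega)).2 ha.2⟩
    · intro a ha
      simp only [Finset.coe_filter, Finset.mem_range, Set.mem_ofPred_eq] at ha ⊢
      exact ⟨by omega, (hsym.mem_iff (a := a) (by omega)).1 ha.2⟩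
    · intro a ha
      simp only [Finset.coe_filter, Finset.mem_range, Set.mem_ofPred_eq] at ha
      dsimp only
      omega
    · intro a ha
      simp only [Finset.coe_filter, Finset.mem_range, Set.mem_ofPred_eq] at ha
      dsimp only
      omega
  have h3 := Finset.card_filter_add_card_filter_not (s := Finset.range (conductorNS S))
    (fun a => a ∈ S)
  rw [Finset.card_range] at h3
  rw [h1]
  omega

open Classical in
/-- Inclusion–exclusion over the decompositions of `m`, for an arbitrary set `S`. -/
lemma nu_add_gaps (S : Set ℕ) (m : ℕ) :
    nu S m + 2 * ((Finset.range (m + 1)).filter (fun a => a ∉ S)).card =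
      m + 1 + ((Finset.range (m + 1)).filter (fun a => a ∉ S ∧ m - a ∉ S)).card := by
  have hrefl : ((Finset.range (m + 1)).filter (fun a => a ∉ S)).card =
      ((Finset.range (m + 1)).filter (fun a => m - a ∉ S)).card := by
    rw [Finset.card_filter, Finset.card_filter,
      ← Finset.sum_range_reflect (fun a => if a ∉ S then 1 else 0)]
    rfl
  have hpt : ∀ a ∈ Finset.range (m + 1),
      (if a ∈ S ∧ m - a ∈ S then 1 else 0) +
        ((if a ∉ S then 1 else 0) + (if m - a ∉ S then 1 else 0)) =
      1 + (if a ∉ S ∧ m - a ∉ S then 1 else 0) := by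
    intro a _
    by_cases h1 : a ∈ S <;> by_cases h2 : m - a ∈ S <;> simp [h1, h2]
  have hsum := Finset.sum_congr rfl hpt
  simp only [Finset.sum_add_distrib, ← Finset.card_filter, Finset.sum_const, Finset.card_range,
    smul_eq_mul, mul_one] at hsum
  rw [nu_eq_card]
  omega

open Classical in
/-- The map `a ↦ c - 1 - a` sends decompositions of `m` into two gaps to decompositions of `q`
in `S`. -/
lemma card_gap_pairs {S : Set ℕ} (hsym : IsSymmetricNS S) {m q : ℕ} (hc : conductorNS S ≤ m)
    (hq : q + m + 2 = 2 * conductorNS S) :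
    ((Finset.range (m + 1)).filter (fun a => a ∉ S ∧ m - a ∉ S)).card = nu S q := by
  rw [nu_eq_card]
  -- Every gap is below `c`, so `a` and `m - a` are, and none of the subtractions truncates.
  have key : ∀ a ∈ (Finset.range (m + 1)).filter (fun a => a ∉ S ∧ m - a ∉ S),
      a < conductorNS S ∧ m - a < conductorNS S ∧ a ≤ m ∧ a ∉ S ∧ m - a ∉ S := by
    intro a ha
    simp only [Finset.mem_filter, Finset.mem_range] at ha
    refine ⟨?_, ?_, by omega, ha.2⟩
    · by_contra h
      exact ha.2.1 (hsym.mem_of_le (by omega))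
    · by_contra h
      exact ha.2.2 (hsym.mem_of_le (by omega))
  refine Finset.card_nbij' (fun a => conductorNS S - 1 - a) (fun a => conductorNS S - 1 - a)
    ?_ ?_ ?_ ?_
  · intro a ha
    obtain ⟨h1, h2, h3, h4, h5⟩ := key a ha
    simp only [Finset.coe_filter, Finset.mem_range, Set.mem_ofPred_eq]
    exact ⟨by omega, (hsym.mem_iff (b := a) (by omega)).2 h4,
      (hsym.mem_iff (b := m - a) (by omega)).2 h5⟩
  · intro a ha
    simp only [Finset.coe_filter, Finset.mem_range, Set.mem_ofPred_eq] at ha ⊢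
    exact ⟨by omega, (hsym.mem_iff (a := a) (by omega)).1 ha.2.1,
      (hsym.mem_iff (a := q - a) (by omega)).1 ha.2.2⟩
  · intro a ha
    obtain ⟨h1, -⟩ := key a ha
    dsimp only
    omega
  · intro a ha
    simp only [Finset.coe_filter, Finset.mem_range, Set.mem_ofPred_eq] at ha
    dsimp only
    omega

/-- for symmetric `S` with conductor `c`, `m ∈ S` with `c ≤ m ≤ 2c-2`,
`n = m - c + 1` and `q = 2c - 2 - m`, one has `ν(m) = n + ν(q)`. -/
theorem stmt_11 (S : Set ℕ) (hS : IsNumericalSemigroup S) (hsym : IsSymmetricNS S)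
    (m : ℕ) (hm : m ∈ S) (hc : conductorNS S ≤ m)
    (hm2 : (m : ℤ) ≤ 2 * (conductorNS S : ℤ) - 2)
    (n q : ℕ)
    (hn : (n : ℤ) = (m : ℤ) - (conductorNS S : ℤ) + 1)
    (hq : (q : ℤ) = 2 * (conductorNS S : ℤ) - 2 - (m : ℤ)) :
    nu S m = n + nu S q := by
  have h1 := nu_add_gaps S m
  have h2 := two_mul_card_gaps hsym hc
  have h3 := card_gap_pairs (q := q) hsym hc (by omega)
  omega
end

section
/- Let S be a symmetric numerical semigroup with conductor c, let m ∈ S with c ≤ m ≤ 2c − 2, set n = m − c + 1 and q = 2c − 2 − m, and assume n ∉ S. Let n′ = min{s ∈ S : s > n} and δ = n′ − n. Then δ_FR(m) = min({ν(m + k) : 0 ≤ k ≤ δ − 3} ∪ {n′}), where the set of ν-values is empty when δ ≤ 2. In particular, δ_FR(m) ≤ n′. -/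
open Classical in
/-- The counting identity `ν(c - 1 + t) = t + #{s ∈ S : s + t ∉ S}`. Every such `s` is below `c`,
so the count is taken over `Finset.range c`. -/
lemma nu_conductor_add (S : Set ℕ) (c t : ℕ) (hc : 1 ≤ c) (hcS : ∀ x, c ≤ x → x ∈ S)
    (hs : ∀ a b, a + b = c - 1 → (a ∈ S ↔ b ∉ S)) :
    nu S (c - 1 + t) = t + ((Finset.range c).filter (fun s => s ∈ S ∧ s + t ∉ S)).card := by
  set A := (Finset.range (c + t)).filter (fun a => a ∈ S) with hA
  set B := ((Finset.range c).filter (fun a => a ∈ S)).image (fun a => a + t) with hB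
  have hinj : Function.Injective (fun a : ℕ => a + t) := fun a b h => by simpa using h
  have h1 : nu S (c - 1 + t) = (A \ B).card := by
    have hset : {p : ℕ × ℕ | p.1 ∈ S ∧ p.2 ∈ S ∧ p.1 + p.2 = c - 1 + t}
        = (fun a : ℕ => (a, c - 1 + t - a)) '' ((A \ B : Finset ℕ) : Set ℕ) := by
      ext ⟨a, b⟩
      simp only [Set.mem_ofPred_eq, Set.mem_image, Finset.mem_coe, Finset.mem_sdiff, hA, hB,
        Finset.mem_filter, Finset.mem_range, Finset.mem_image, Prod.mk.injEq]
      constructor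
      · rintro ⟨ha, hb, hab⟩
        refine ⟨a, ⟨⟨by omega, ha⟩, ?_⟩, rfl, by omega⟩
        rintro ⟨x, ⟨_, hx⟩, rfl⟩
        exact (hs x b (by omega)).1 hx hb
      · rintro ⟨a', ⟨⟨ha1, ha2⟩, ha3⟩, rfl, rfl⟩
        refine ⟨ha2, ?_, by omega⟩
        by_cases hat : a' < t
        · exact hcS _ (by omega)
        · by_contra hb
          exact ha3 ⟨a' - t, ⟨by omega, (hs _ _ (by omega)).2 hb⟩, by omega⟩
    rw [nu, hset, Set.ncard_image_of_injective, Set.ncard_coe_finset]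
    intro a b h
    exact (Prod.mk.inj h).1
  have h2 : A.card = B.card + t := by
    have hu : A = (Finset.range c).filter (fun a => a ∈ S) ∪ Finset.Ico c (c + t) := by
      ext x
      simp only [hA, Finset.mem_filter, Finset.mem_range, Finset.mem_union, Finset.mem_Ico]
      constructor
      · rintro ⟨h, h'⟩
        by_cases hx : x < c
        · exact Or.inl ⟨hx, h'⟩
        · exact Or.inr ⟨by omega, h⟩
      · rintro (⟨h, h'⟩ | ⟨h, h'⟩)
        · exact ⟨by omega, h'⟩
        · exact ⟨h', hcS x h⟩
    rw [hu, Finset.card_union_of_disjoint, hB, Finset.card_image_of_injective _ hinj,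
      Nat.card_Ico, Nat.add_sub_cancel_left]
    rw [Finset.disjoint_left]
    intro x hx hx'
    simp only [Finset.mem_filter, Finset.mem_range, Finset.mem_Ico] at hx hx'
    omega
  have h3 : (B \ A).card
      = ((Finset.range c).filter (fun s => s ∈ S ∧ s + t ∉ S)).card := by
    refine Eq.trans ?_ (Finset.card_image_of_injective _ hinj)
    congr 1
    ext x
    simp only [Finset.mem_sdiff, hA, hB, Finset.mem_filter, Finset.mem_range, Finset.mem_image]
    constructor
    · rintro ⟨⟨a, ⟨ha, ha'⟩, rfl⟩, h⟩
      exact ⟨a, ⟨ha, ha', fun h' => h ⟨by omega, h'⟩⟩, rfl⟩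
    · rintro ⟨a, ⟨ha, ha', h⟩, rfl⟩
      exact ⟨⟨a, ⟨ha, ha'⟩, rfl⟩, fun h' => h h'.2⟩
  have h4 := Finset.card_sdiff_add_card A B
  have h5 := Finset.card_sdiff_add_card B A
  rw [Finset.union_comm] at h5
  omega

/-- for symmetric `S`, `m ∈ S` with `c ≤ m ≤ 2c-2`, `n = m-c+1 ∉ S`,
`n' = min {s ∈ S : s > n}` and `δ = n' - n`, one has
`δ_FR(m) = min({ν(m+k) : 0 ≤ k ≤ δ-3} ∪ {n'})` (the first set being empty when
`δ ≤ 2`); in particular `δ_FR(m) ≤ n'`. -/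
theorem stmt_12 (S : Set ℕ) (hS : IsNumericalSemigroup S) (hsym : IsSymmetricNS S)
    (m : ℕ) (hm : m ∈ S) (hc : conductorNS S ≤ m)
    (hm2 : (m : ℤ) ≤ 2 * (conductorNS S : ℤ) - 2)
    (n q : ℕ)
    (hn : (n : ℤ) = (m : ℤ) - (conductorNS S : ℤ) + 1)
    (hq : (q : ℤ) = 2 * (conductorNS S : ℤ) - 2 - (m : ℤ))
    (hnS : n ∉ S)
    (n' : ℕ) (hn' : n' = sInf {s | s ∈ S ∧ n < s})
    (δ : ℕ) (hδ : δ = n' - n) :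
    deltaFR S m = sInf ({v | ∃ k : ℕ, k + 3 ≤ δ ∧ v = nu S (m + k)} ∪ {n'}) ∧
      deltaFR S m ≤ n' := by
  classical
  obtain ⟨h0, hadd, hfin⟩ := hS
  set c := conductorNS S with hcdef
  have hc1 : 1 ≤ c := by omega
  have hcS : ∀ x, c ≤ x → x ∈ S := by
    have hne : {c | ∀ n, c ≤ n → n ∈ S}.Nonempty := by
      obtain ⟨N, hN⟩ := hfin.bddAbove
      refine ⟨N + 1, fun x hx => ?_⟩
      by_contra hxS
      have := hN hxS
      omega
    exact Nat.sInf_mem hne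
  have hs : ∀ a b, a + b = c - 1 → (a ∈ S ↔ b ∉ S) := by
    intro a b hab
    have h := hsym (a : ℤ)
    rw [show (conductorNS S : ℤ) - 1 - (a : ℤ) = (b : ℤ) by omega] at h
    simpa [memZ] using h
  have hgap : c - 1 ∉ S := (hs 0 (c - 1) (by omega)).1 h0
  have hnu := fun t => nu_conductor_add S c t hc1 hcS hs
  have hne : {s | s ∈ S ∧ n < s}.Nonempty := ⟨c, hcS c le_rfl, by omega⟩
  obtain ⟨hn'S, hnn'⟩ : n' ∈ S ∧ n < n' := hn' ▸ Nat.sInf_mem hne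
  have hmin : ∀ x, x ∈ S → n < x → n' ≤ x := fun x hx hx' => hn' ▸ Nat.sInf_le ⟨hx, hx'⟩
  have hn'c : n' ≤ c := hmin c (hcS c le_rfl) (by omega)
  have hlow : ∀ t, t ≤ nu S (c - 1 + t) := fun t => by rw [hnu]; omega
  have hval : nu S (m + δ) = n' := by
    rw [show m + δ = c - 1 + n' by omega, hnu, Finset.card_eq_zero.2 (Finset.filter_false_of_mem ?_)]
    · simp
    · rintro s - ⟨h1, h2⟩
      exact h2 (hadd _ _ h1 hn'S)
  have hlow1 : ∀ t, t ∉ S → t + 1 ≤ nu S (c - 1 + t) := fun t ht => by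
    rw [hnu]
    refine Nat.add_le_add_left (Finset.card_pos.2 ⟨0, ?_⟩) t
    simp [h0, ht]
    omega
  have hlow2 : ∀ t, t ∉ S → t < c - 1 → t + 2 ≤ nu S (c - 1 + t) := fun t ht htc => by
    rw [hnu]
    refine Nat.add_le_add_left (Finset.one_lt_card.2 ⟨0, ?_, c - 1 - t, ?_, by omega⟩) t
    · simp [h0, ht]
      omega
    · simp only [Finset.mem_filter, Finset.mem_range]
      refine ⟨by omega, (hs _ t (by omega)).2 ht, ?_⟩
      rwa [Nat.sub_add_cancel (by omega)]
  have hgaps : ∀ t, n ≤ t → t < n' → t ∉ S := fun t h1 h2 h3 => by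
    rcases h1.eq_or_lt with rfl | h1
    · exact hnS h3
    · exact absurd (hmin t h3 h1) (by omega)
  have hle : ∀ r, m ≤ r → deltaFR S m ≤ nu S r := fun r hr =>
    Nat.sInf_le ⟨r, ⟨hcS r (by omega), hr⟩, rfl⟩
  have hle' : deltaFR S m ≤ n' := hval ▸ hle (m + δ) (by omega)
  refine ⟨le_antisymm ?_ ?_, hle'⟩
  · refine le_csInf ⟨n', Or.inr rfl⟩ ?_
    rintro v (⟨k, -, rfl⟩ | rfl)
    · exact hle _ (by omega)
    · exact hle'
  · refine le_csInf ⟨_, m, ⟨hm, le_rfl⟩, rfl⟩ ?_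
    rintro _ ⟨r, ⟨-, hr⟩, rfl⟩
    obtain ⟨k, rfl⟩ := Nat.exists_eq_add_of_le hr
    by_cases hk : k + 3 ≤ δ
    · exact Nat.sInf_le (Or.inl ⟨k, hk, rfl⟩)
    · refine (Nat.sInf_le (Or.inr rfl)).trans ?_
      rw [show m + k = c - 1 + (n + k) by omega]
      rcases lt_or_ge (n + k) n' with h | h
      · have hg := hgaps (n + k) (by omega) h
        rcases Nat.lt_or_ge (n + k + 1) n' with h' | h'
        -- here `n + k = n' - 2`, which is below `c - 1` because `n' ≤ c`
        · have := hlow2 _ hg (by omega)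
          omega
        · have := hlow1 _ hg
          omega
      · exact h.trans (hlow _)
end

section
/- Let δ_0, δ_1, …, δ_h be a telescopic sequence of positive integers and let S be the numerical semigroup generated by δ_0, …, δ_h. Then the Apéry set of S relative to δ_0 is exactly the set {λ_1·δ_1 + … + λ_h·δ_h : 0 ≤ λ_k < n_k for 1 ≤ k ≤ h}; in particular, these n_1·n_2·⋯·n_h = δ_0 sums are pairwise incongruent modulo δ_0, and each of them is the least element of S in its residue class modulo δ_0. -/
/-- The submonoid of `ℕ` generated by the first `i` terms `δ_0, …, δ_{i-1}`. -/
abbrev initGen (δ : ℕ → ℕ) (i : ℕ) : AddSubmonoid ℕ :=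
  AddSubmonoid.closure {x : ℕ | ∃ k < i, x = δ k}

lemma mem_initGen (δ : ℕ → ℕ) {i k : ℕ} (hk : k < i) : δ k ∈ initGen δ i :=
  AddSubmonoid.subset_closure ⟨k, hk, rfl⟩

lemma initGen_mono (δ : ℕ → ℕ) {i j : ℕ} (hij : i ≤ j) : initGen δ i ≤ initGen δ j :=
  AddSubmonoid.closure_mono fun _ ⟨k, hk, hx⟩ => ⟨k, hk.trans_le hij, hx⟩

lemma mul_mem_initGen (δ : ℕ → ℕ) {i x : ℕ} (c : ℕ) (hx : x ∈ initGen δ i) :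
    c * x ∈ initGen δ i := by
  simpa using AddSubmonoid.nsmul_mem _ hx c

lemma exists_eq_add_of_mem_initGen_succ (δ : ℕ → ℕ) {i x : ℕ} (hx : x ∈ initGen δ (i + 1)) :
    ∃ y ∈ initGen δ i, ∃ c, x = y + c * δ i := by
  induction hx using AddSubmonoid.closure_induction with
  | mem x hx =>
    obtain ⟨k, hk, rfl⟩ := hx
    rcases Nat.lt_succ_iff_lt_or_eq.1 hk with hk | rfl
    · exact ⟨δ k, mem_initGen δ hk, 0, by simp⟩
    · exact ⟨0, zero_mem _, 1, by simp⟩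
  | zero => exact ⟨0, zero_mem _, 0, by simp⟩
  | add x y _ _ hx hy =>
    obtain ⟨a, ha, c, rfl⟩ := hx
    obtain ⟨b, hb, e, rfl⟩ := hy
    exact ⟨a + b, add_mem ha hb, c + e, by ring⟩

lemma exists_normalForm (δ n : ℕ → ℕ) (i : ℕ) (hn : ∀ k, 1 ≤ k → k ≤ i → 0 < n k)
    (htel : ∀ k, 1 ≤ k → k ≤ i → n k * δ k ∈ initGen δ k) {x : ℕ}
    (hx : x ∈ initGen δ (i + 1)) :
    ∃ (q : ℕ) (lam : ℕ → ℕ), (∀ k, 1 ≤ k → k ≤ i → lam k < n k) ∧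
      x = q * δ 0 + ∑ k ∈ Finset.Icc 1 i, lam k * δ k := by
  induction i generalizing x with
  | zero =>
    obtain ⟨y, hy, c, rfl⟩ := exists_eq_add_of_mem_initGen_succ δ hx
    have : y = 0 := by simpa [initGen] using hy
    exact ⟨c, 0, by omega, by simp [this]⟩
  | succ i ih =>
    obtain ⟨y, hy, c, rfl⟩ := exists_eq_add_of_mem_initGen_succ δ hx
    obtain ⟨q, lam, hlam, heq⟩ := ih (fun k h1 h2 => hn k h1 (by omega))
      (fun k h1 h2 => htel k h1 (by omega))
      (add_mem hy (mul_mem_initGen δ (c / n (i + 1)) (htel (i + 1) (by omega) le_rfl)))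
    refine ⟨q, Function.update lam (i + 1) (c % n (i + 1)), ?_, ?_⟩
    · intro k h1 h2
      rcases eq_or_ne k (i + 1) with rfl | hk
      · simpa using Nat.mod_lt _ (hn (i + 1) h1 le_rfl)
      · simpa [hk] using hlam k h1 (by omega)
    · have hs : ∑ k ∈ Finset.Icc 1 i, Function.update lam (i + 1) (c % n (i + 1)) k * δ k
          = ∑ k ∈ Finset.Icc 1 i, lam k * δ k := by
        refine Finset.sum_congr rfl fun k hk => ?_
        have : k ≠ i + 1 := by have := (Finset.mem_Icc.1 hk).2; omega
        simp [this]
      rw [Finset.sum_Icc_succ_top (by omega), hs, Function.update_self, ← add_assoc, ← heq]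
      conv_lhs => rw [← Nat.div_add_mod c (n (i + 1))]
      ring

/-- The terms of index below `i` are all divisible by `d_i`, so only the last coefficient
survives modulo `d_i`. -/
lemma normalForm_unique (δ n : ℕ → ℕ) (h0 : 0 < δ 0)
    (hn : ∀ k, n k = (Finset.range k).gcd δ / (Finset.range (k + 1)).gcd δ)
    (i : ℕ) (lam mu : ℕ → ℕ)
    (hlam : ∀ k, 1 ≤ k → k ≤ i → lam k < n k) (hmu : ∀ k, 1 ≤ k → k ≤ i → mu k < n k)
    (heq : ∑ k ∈ Finset.Icc 1 i, lam k * δ k ≡ ∑ k ∈ Finset.Icc 1 i, mu k * δ k [MOD δ 0]) :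
    ∀ k, 1 ≤ k → k ≤ i → lam k = mu k := by
  induction i with
  | zero => intro k h1 h2; omega
  | succ i ih =>
    rw [Finset.sum_Icc_succ_top (by omega), Finset.sum_Icc_succ_top (by omega)] at heq
    have hdvd : ∀ k ≤ i, (Finset.range (i + 1)).gcd δ ∣ δ k := fun k hk =>
      Finset.gcd_dvd (Finset.mem_range.2 (by omega))
    have hz : ∀ f : ℕ → ℕ, 0 ≡ ∑ k ∈ Finset.Icc 1 i, f k * δ k
        [MOD (Finset.range (i + 1)).gcd δ] := fun f =>
      ((Nat.modEq_zero_iff_dvd).2 (Finset.dvd_sum fun k hk =>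
        (hdvd k (Finset.mem_Icc.1 hk).2).mul_left _)).symm
    have hd0 : 0 < (Finset.range (i + 1)).gcd δ := Nat.pos_of_dvd_of_pos (hdvd 0 (by omega)) h0
    have h1 := Nat.ModEq.add_left_cancel ((hz lam).symm.trans (hz mu))
      (heq.of_dvd (hdvd 0 (by omega)))
    have h2 := Nat.ModEq.cancel_right_div_gcd hd0 h1
    have hg : (Finset.range (i + 1 + 1)).gcd δ
        = Nat.gcd ((Finset.range (i + 1)).gcd δ) (δ (i + 1)) := by
      rw [Finset.range_add_one, Finset.gcd_insert]
      exact Nat.gcd_comm _ _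
    rw [← hg, ← hn] at h2
    have htop : lam (i + 1) = mu (i + 1) :=
      h2.eq_of_lt_of_lt (hlam _ (by omega) le_rfl) (hmu _ (by omega) le_rfl)
    rw [htop] at heq
    intro k hk1 hk2
    rcases eq_or_ne k (i + 1) with rfl | hk
    · exact htop
    · exact ih (fun k h1 h2 => hlam k h1 (by omega)) (fun k h1 h2 => hmu k h1 (by omega))
        (Nat.ModEq.add_right_cancel' _ heq) k hk1 (by omega)

lemma exists_mem_modEq_gcd (δ : ℕ → ℕ) (h0 : 0 < δ 0) (i : ℕ) :
    ∃ s ∈ initGen δ i, s ≡ (Finset.range i).gcd δ [MOD δ 0] := by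
  induction i with
  | zero => exact ⟨0, zero_mem _, by simp [Nat.ModEq]⟩
  | succ i ih =>
    obtain ⟨s, hs, hsd⟩ := ih
    have hg : (Finset.range (i + 1)).gcd δ = Nat.gcd ((Finset.range i).gcd δ) (δ i) := by
      rw [Finset.range_add_one, Finset.gcd_insert]
      exact Nat.gcd_comm _ _
    -- The Bézout coefficients may be negative; only their residues modulo `δ 0` matter.
    have key : ∀ a : ℤ, ∃ b : ℕ, (b : ℤ) ≡ a [ZMOD δ 0] := fun a =>
      ⟨(a % δ 0).toNat, by
        rw [Int.toNat_of_nonneg (Int.emod_nonneg _ (by omega))]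
        exact Int.mod_modEq _ _⟩
    obtain ⟨a, ha⟩ := key (Nat.gcdA ((Finset.range i).gcd δ) (δ i))
    obtain ⟨b, hb⟩ := key (Nat.gcdB ((Finset.range i).gcd δ) (δ i))
    refine ⟨a * s + b * δ i, add_mem
      (mul_mem_initGen δ a (initGen_mono δ (Nat.le_succ i) hs))
      (mul_mem_initGen δ b (mem_initGen δ (Nat.lt_succ_self i))), ?_⟩
    rw [hg, ← Int.natCast_modEq_iff, Nat.gcd_eq_gcd_ab]
    push_cast
    rw [mul_comm _ (Nat.gcdA _ _), mul_comm _ (Nat.gcdB _ _)]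
    exact (ha.mul (Int.natCast_modEq_iff.2 hsd)).add (hb.mul_right _)

/-- for a telescopic sequence `δ_0, …, δ_h` generating the numerical
semigroup `S`, the Apéry set of `S` relative to `δ_0` is exactly the set `T` of
sums `λ_1·δ_1 + … + λ_h·δ_h` with `0 ≤ λ_k < n_k`; in particular these
`n_1⋯n_h = δ_0` sums are pairwise incongruent modulo `δ_0`, and each of them is
the least element of `S` in its residue class modulo `δ_0`. -/
theorem stmt_19 (h : ℕ) (δ : ℕ → ℕ) (hpos : ∀ k ≤ h, 0 < δ k)
    (d : ℕ → ℕ) (hd : ∀ i, d i = (Finset.range i).gcd δ)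
    (n : ℕ → ℕ) (hn : ∀ i, n i = d i / d (i + 1))
    (hdh1 : d (h + 1) = 1)
    (htel : ∀ i, 1 ≤ i → i ≤ h →
      n i * δ i ∈ AddSubmonoid.closure {x : ℕ | ∃ k < i, x = δ k})
    (S : Set ℕ)
    (hSdef : S = ↑(AddSubmonoid.closure {x : ℕ | ∃ k ≤ h, x = δ k}))
    (T : Set ℕ)
    (hT : T = {m : ℕ | ∃ lam : ℕ → ℕ, (∀ k, 1 ≤ k → k ≤ h → lam k < n k) ∧
      m = ∑ k ∈ Finset.Icc 1 h, lam k * δ k}) :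
    (∏ k ∈ Finset.Icc 1 h, n k = δ 0) ∧
      {a | ∃ i < δ 0, a = apery S (δ 0) i} = T ∧
      (∀ m₁ ∈ T, ∀ m₂ ∈ T, m₁ % δ 0 = m₂ % δ 0 → m₁ = m₂) ∧
      (∀ m ∈ T, m = apery S (δ 0) (m % δ 0)) := by
  obtain rfl : d = fun i => (Finset.range i).gcd δ := funext hd
  simp only at hn hdh1
  have h0 : 0 < δ 0 := hpos 0 (Nat.zero_le _)
  have hdpos : ∀ i, 0 < (Finset.range (i + 1)).gcd δ := fun i =>
    Nat.pos_of_dvd_of_pos (Finset.gcd_dvd (Finset.mem_range.2 (Nat.succ_pos i))) h0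
  have hddvd : ∀ i, (Finset.range (i + 1)).gcd δ ∣ (Finset.range i).gcd δ := fun i =>
    Finset.gcd_mono (Finset.range_mono (Nat.le_succ i))
  have hnpos : ∀ k, 1 ≤ k → k ≤ h → 0 < n k := by
    intro k hk _
    obtain ⟨j, rfl⟩ : ∃ j, k = j + 1 := ⟨k - 1, by omega⟩
    rw [hn]
    exact Nat.div_pos (Nat.le_of_dvd (hdpos j) (hddvd _)) (hdpos _)
  have hprod : ∀ i, (∏ k ∈ Finset.Icc 1 i, n k) * (Finset.range (i + 1)).gcd δ = δ 0 := by
    intro i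
    induction i with
    | zero => simp
    | succ i ih =>
      rw [Finset.prod_Icc_succ_top (by omega), hn (i + 1), mul_assoc,
        Nat.div_mul_cancel (hddvd _), ih]
  have hS : S = (initGen δ (h + 1) : Set ℕ) := by
    rw [hSdef]
    simp only [initGen, Nat.lt_succ_iff]
  have hTS : ∀ m ∈ T, m ∈ S := by
    intro m hm
    rw [hT] at hm
    obtain ⟨lam, -, rfl⟩ := hm
    rw [hS]
    exact sum_mem fun k hk => mul_mem_initGen δ _
      (mem_initGen δ (Nat.lt_succ_of_le (Finset.mem_Icc.1 hk).2))
  have hrep : ∀ m ∈ S, ∃ q, ∃ t ∈ T, m = q * δ 0 + t := by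
    intro m hm
    rw [hS] at hm
    obtain ⟨q, lam, hlam, heq⟩ := exists_normalForm δ n h hnpos htel hm
    exact ⟨q, _, by rw [hT]; exact ⟨lam, hlam, rfl⟩, heq⟩
  have hinj : ∀ m₁ ∈ T, ∀ m₂ ∈ T, m₁ % δ 0 = m₂ % δ 0 → m₁ = m₂ := by
    intro m₁ hm₁ m₂ hm₂ heq
    rw [hT] at hm₁ hm₂
    obtain ⟨lam, hlam, rfl⟩ := hm₁
    obtain ⟨mu, hmu, rfl⟩ := hm₂
    have := normalForm_unique δ n h0 hn h lam mu hlam hmu heq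
    refine Finset.sum_congr rfl fun k hk => ?_
    rw [this k (Finset.mem_Icc.1 hk).1 (Finset.mem_Icc.1 hk).2]
  have hne : ∀ i, {m | m ∈ S ∧ m % δ 0 = i % δ 0}.Nonempty := by
    intro i
    obtain ⟨s, hs, hs1⟩ := exists_mem_modEq_gcd δ h0 (h + 1)
    rw [hdh1] at hs1
    refine ⟨i * s, ?_, ?_⟩
    · rw [hS]
      exact mul_mem_initGen δ i hs
    · simpa [Nat.ModEq] using hs1.mul_left i
  have hap : ∀ i, apery S (δ 0) i ∈ S ∧ apery S (δ 0) i % δ 0 = i % δ 0 := fun i =>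
    Nat.sInf_mem (hne i)
  have hapT : ∀ i, apery S (δ 0) i ∈ T := by
    intro i
    obtain ⟨hiS, hi⟩ := hap i
    obtain ⟨q, t, ht, heq⟩ := hrep _ hiS
    have hle : apery S (δ 0) i ≤ t := by
      refine Nat.sInf_le ⟨hTS t ht, ?_⟩
      rw [← hi, heq]
      simp
    have : apery S (δ 0) i = t := le_antisymm hle (heq ▸ Nat.le_add_left _ _)
    rwa [this]
  have hmin : ∀ m ∈ T, m = apery S (δ 0) (m % δ 0) := fun m hm =>
    hinj m hm _ (hapT _) (by rw [(hap _).2, Nat.mod_mod])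
  refine ⟨by simpa [hdh1] using hprod h, ?_, hinj, hmin⟩
  ext a
  constructor
  · rintro ⟨i, -, rfl⟩
    exact hapT i
  · exact fun ha => ⟨a % δ 0, Nat.mod_lt _ h0, hmin a ha⟩
end
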